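/- Assume condition (R). Then the radius of convexity r^c(h_{γ,σ}(·;q)) = r^c_0(h_{γ,σ}(·;q)) satisfies Γ_q(γ+3)/(4σ²Γ_q(γ+1)) < r^c(h_{γ,σ}(·;q)) < 2Γ_q(γ+3)Γ_q(γ+5) / ( σ²(8Γ_q(γ+1)Γ_q(γ+5) − 9q²Γ_q(γ+3)²) ). -/

import Mathlib

noncomputable def qPochInf (a q : ℝ) : ℝ := ∏' k : ℕ, (1 - a * q ^ k)

noncomputable def qGamma (q x : ℝ) : ℝ :=
  qPochInf q q * (1 - q) ^ (1 - x) / qPochInf (q ^ x) q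

noncomputable def qML (γ σ q : ℝ) (z : ℂ) : ℂ :=
  ∑' n : ℕ,
    (((-1) ^ n * σ ^ (2 * n) * q ^ (n * (n - 1)) / qGamma q (2 * n + γ + 1) : ℝ) : ℂ) * z ^ (2 * n)

noncomputable def qMLR (γ σ q : ℝ) (x : ℝ) : ℝ :=
  ∑' n : ℕ,
    ((-1) ^ n * σ ^ (2 * n) * q ^ (n * (n - 1)) / qGamma q (2 * n + γ + 1)) * x ^ (2 * n)

def condR (q γ : ℝ) : Prop :=
  (γ = 0 ∨ γ = 1) ∨
    (γ ∈ Set.Ioo (0 : ℝ) 2 ∧ γ ≠ 1 ∧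
      1 < q⁻¹ * (1 - q) * (1 - q ^ (γ + 1)) * (1 - q ^ (γ + 2)))

noncomputable def radiusStarlike (α : ℝ) (f : ℂ → ℂ) : ℝ :=
  sSup {r : ℝ | 0 < r ∧ ∀ z : ℂ, 0 < ‖z‖ → ‖z‖ < r →
    α < (z * deriv f z / f z).re}

noncomputable def radiusConvex (α : ℝ) (f : ℂ → ℂ) : ℝ :=
  sSup {r : ℝ | 0 < r ∧ ∀ z : ℂ, ‖z‖ < r →
    α < (1 + z * deriv (deriv f) z / deriv f z).re}

noncomputable def fML (γ σ q : ℝ) (z : ℂ) : ℂ :=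
  Complex.exp ((1 / ((γ : ℂ) + 1)) *
    Complex.log (z ^ ((γ : ℂ) + 1) * (qGamma q (γ + 1) : ℂ) * qML γ σ q z))

noncomputable def gML (γ σ q : ℝ) (z : ℂ) : ℂ :=
  z * (qGamma q (γ + 1) : ℂ) * qML γ σ q z

noncomputable def hML (γ σ q : ℝ) (z : ℂ) : ℂ :=
  z * (qGamma q (γ + 1) : ℂ) *
    ∑' n : ℕ,
      (((-1) ^ n * σ ^ (2 * n) * q ^ (n * (n - 1)) / qGamma q (2 * n + γ + 1) : ℝ) : ℂ) * z ^ n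

noncomputable def hMLR (γ σ q : ℝ) (x : ℝ) : ℝ :=
  x * qGamma q (γ + 1) *
    ∑' n : ℕ,
      ((-1) ^ n * σ ^ (2 * n) * q ^ (n * (n - 1)) / qGamma q (2 * n + γ + 1)) * x ^ n


lemma aux_P (κ x R : ℝ) (hκ0 : 0 < κ) (hκ : κ ≤ 3/10) (h1 : x^2 ≤ R) (h2 : R ≤ 1/16) :
    (65/100 + 1/100) * κ^2 < 1 - 6*x + 8*R + κ*(24*x^2 - 12*R - 30*R*x) + 27*κ^2*R^2 := by
  have hx : x ≤ 1/4 := by nlinarith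
  have hx' : -(1/4) ≤ x := by nlinarith
  have e1 : 0 ≤ (R - x^2) * (8 - 12*κ - 30*κ*x) := by
    apply mul_nonneg (by linarith)
    nlinarith
  have e2 : 0 ≤ 27*κ^2*R^2 := by positivity
  have e3 : (66/100) * κ^2 < (1-2*x)*(1-4*x) + κ*(12*x^2-30*x^3) := by
    have e4 : (66/100) * κ^2 ≤ (198/1000)*κ := by nlinarith
    have : (198/1000)*κ < (1-2*x)*(1-4*x) + κ*(12*x^2-30*x^3) := by
      have e6 : 0 ≤ (1-2*x)*(1-4*x) := mul_nonneg (by linarith) (by linarith)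
      by_cases hc : x ≤ 17/100
      · have : 0 ≤ 12*x^2-30*x^3 := by nlinarith [sq_nonneg x]
        have := mul_nonneg hκ0.le this
        nlinarith
      · push Not at hc
        have : 198/1000 < 12*x^2-30*x^3 := by nlinarith [mul_nonneg (sub_nonneg.2 hx) (sub_nonneg.2 hc.le), sq_nonneg x, mul_nonneg (mul_nonneg (sub_nonneg.2 hx) (sub_nonneg.2 hc.le)) (sub_nonneg.2 hc.le)]
        nlinarith [mul_lt_mul_of_pos_left this hκ0]
    linarith
  nlinarith

lemma re_div_pos_of (N D : ℂ) (h : 0 < (N * (starRingEnd ℂ) D).re) : 0 < (N / D).re := by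
  have hD : D ≠ 0 := by rintro rfl; simp at h
  have : 0 < Complex.normSq D := Complex.normSq_pos.2 hD
  rw [Complex.div_re, ← add_div]
  apply div_pos _ this
  simpa using h

lemma lower_ineq (κ : ℝ) (s n d : ℂ) (hκ0 : 0 < κ) (hκ : κ ≤ 3/10) (hs : ‖s‖ ≤ 1/4)
    (hn : ‖n‖ ≤ 16*κ^2*(1/4)^3*(16/13)) (hd : ‖d‖ ≤ 4*κ^2*(1/4)^3*(16/13)) :
    0 < ((1 - 4*s + 9*κ*s^2 + n) / (1 - 2*s + 3*κ*s^2 + d)).re := by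
  apply re_div_pos_of
  set A : ℂ := 1 - 4*s + 9*κ*s^2 with hA
  set B : ℂ := 1 - 2*s + 3*κ*s^2 with hB
  have hs2 : ‖s‖^2 ≤ 1/16 := by nlinarith [norm_nonneg s]
  have nA : ‖A‖ ≤ 2 + 9*κ/16 := by
    calc ‖A‖ ≤ ‖(1:ℂ)‖ + ‖4*s‖ + ‖9*κ*s^2‖ := by
          rw [hA]; exact (norm_add_le _ _).trans (add_le_add_left (norm_sub_le _ _) _)
      _ = 1 + 4*‖s‖ + 9*κ*‖s‖^2 := by simp [abs_of_pos hκ0]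
      _ ≤ _ := by nlinarith
  have nB : ‖B‖ ≤ 3/2 + 3*κ/16 := by
    calc ‖B‖ ≤ ‖(1:ℂ)‖ + ‖2*s‖ + ‖3*κ*s^2‖ := by
          rw [hB]; exact (norm_add_le _ _).trans (add_le_add_left (norm_sub_le _ _) _)
      _ = 1 + 2*‖s‖ + 3*κ*‖s‖^2 := by simp [abs_of_pos hκ0]
      _ ≤ _ := by nlinarith
  have k2 : κ^2 ≤ 9/100 := by nlinarith
  have nD : ‖B + d‖ ≤ 157/100 := by
    refine (norm_add_le _ _).trans ?_
    nlinarith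
  have split : (A + n) * (starRingEnd ℂ) (B + d) = A * (starRingEnd ℂ) B + (A * (starRingEnd ℂ) d + n * (starRingEnd ℂ) (B + d)) := by
    simp only [map_add]; ring
  have err : ‖A * (starRingEnd ℂ) d + n * (starRingEnd ℂ) (B + d)‖ ≤ 66/100*κ^2 := by
    refine (norm_add_le _ _).trans ?_
    rw [norm_mul, norm_mul, RCLike.norm_conj, RCLike.norm_conj]
    have t1 : ‖A‖ * ‖d‖ ≤ (2 + 9*(3/10)/16) * (4*κ^2*(1/4)^3*(16/13)) := by
      gcongr; linarith
    have t2 : ‖n‖ * ‖B + d‖ ≤ (16*κ^2*(1/4)^3*(16/13)) * (157/100) := by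
      gcongr
    nlinarith [sq_nonneg κ]
  have err2 := (abs_le.1 (Complex.abs_re_le_norm (A * (starRingEnd ℂ) d + n * (starRingEnd ℂ) (B + d)))).1
  rw [split, Complex.add_re]
  have hR : s.re^2 + s.im^2 ≤ 1/16 := by
    have := Complex.sq_norm s
    rw [Complex.normSq_apply] at this
    nlinarith
  have main := aux_P κ s.re (s.re^2 + s.im^2) hκ0 hκ (by nlinarith [sq_nonneg s.im]) hR
  have : (A * (starRingEnd ℂ) B).re = 1 - 6*s.re + 8*(s.re^2 + s.im^2) + κ*(24*s.re^2 - 12*(s.re^2 + s.im^2) - 30*(s.re^2 + s.im^2)*s.re) + 27*κ^2*(s.re^2 + s.im^2)^2 := by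
    simp [hA, hB, pow_two]
    ring
  rw [this]
  linarith

lemma upper_ineq (κ u n d : ℝ) (hκ0 : 0 < κ) (hκ : κ ≤ 3/10) (hu : u * (8 - 9*κ) = 2)
    (hn : |n| ≤ 16*κ^2*(2/5)^3*(16/13)) (hd : |d| ≤ 4*κ^2*(2/5)^3*(16/13)) :
    (1 - 4*u + 9*κ*u^2 + n) / (1 - 2*u + 3*κ*u^2 + d) < 0 := by
  have h8 : 0 < 8 - 9*κ := by linarith
  have hu0 : u = 2 / (8 - 9*κ) := by field_simp; linarith
  have hupos : 0 < u := by rw [hu0]; positivity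
  have hule : u ≤ 2/(53/10) := by rw [hu0]; gcongr; linarith
  have hn := (abs_le.1 hn).2
  have hd := (abs_le.1 hd).1
  apply div_neg_of_neg_of_pos
  · have : 1 - 4*u + 9*κ*u^2 = κ*(81*κ - 36)/(8-9*κ)^2 := by
      rw [hu0]; field_simp; ring
    rw [this]
    have : κ*(81*κ - 36)/(8-9*κ)^2 < -(16*κ^2*(2/5)^3*(16/13)) := by
      rw [div_lt_iff₀ (by positivity)]
      have : κ * (8-9*κ)^2 * (16*(2/5)^3*(16/13)) < 36 - 81*κ := by
        nlinarith [mul_nonneg hκ0.le (sub_nonneg.2 hκ), mul_nonneg (mul_nonneg hκ0.le hκ0.le) (sub_nonneg.2 hκ)]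
      nlinarith [mul_lt_mul_of_pos_left this hκ0]
    linarith
  · have : 0 < 3*κ*u^2 := by positivity
    nlinarith

lemma qPoch_summ (a q : ℝ) (hq0 : 0 < q) (hq1 : q < 1) : Summable fun k : ℕ => -(a * q^k) :=
  ((summable_geometric_of_lt_one hq0.le hq1).mul_left a).neg

lemma qPoch_pos (a q : ℝ) (hq0 : 0 < q) (hq1 : q < 1) (ha0 : 0 < a) (ha1 : a < 1) :
    0 < qPochInf a q := by
  have h : ∀ k : ℕ, 0 < 1 + -(a * q^k) := by
    intro k
    have : q^k ≤ 1 := pow_le_one₀ hq0.le hq1.le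
    nlinarith
  have := Real.rexp_tsum_eq_tprod h (Real.summable_log_one_add_of_summable (qPoch_summ a q hq0 hq1))
  simp only [← sub_eq_add_neg] at this
  rw [qPochInf, ← this]
  exact Real.exp_pos _

lemma qPoch_rec (a q : ℝ) (hq0 : 0 < q) (hq1 : q < 1) :
    qPochInf a q = (1 - a) * qPochInf (a * q) q := by
  have m := Real.multipliable_one_add_of_summable (qPoch_summ (a*q) q hq0 hq1)
  simp only [← sub_eq_add_neg] at m
  have e : (fun k : ℕ => 1 - a * q ^ (k+1)) = fun k : ℕ => 1 - a * q * q^k := by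
    funext k; ring
  have := tprod_eq_zero_mul' (f := fun k : ℕ => 1 - a * q ^ k) (by rw [e]; exact m)
  rw [qPochInf, this, e, qPochInf]
  simp

lemma qGamma_pos (q x : ℝ) (hq0 : 0 < q) (hq1 : q < 1) (hx : 0 < x) : 0 < qGamma q x := by
  have h1 := qPoch_pos q q hq0 hq1 hq0 hq1
  have h2 := qPoch_pos (q^x) q hq0 hq1 (Real.rpow_pos_of_pos hq0 x) (Real.rpow_lt_one hq0.le hq1 hx)
  have h3 : 0 < (1 - q) ^ (1 - x) := Real.rpow_pos_of_pos (by linarith) _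
  unfold qGamma
  positivity

lemma qGamma_rec (q x : ℝ) (hq0 : 0 < q) (hq1 : q < 1) (hx : 0 < x) :
    qGamma q (x + 1) = (1 - q^x) / (1 - q) * qGamma q x := by
  have h2 := qPoch_pos (q^(x+1)) q hq0 hq1 (Real.rpow_pos_of_pos hq0 _) (Real.rpow_lt_one hq0.le hq1 (by linarith))
  have h4 : q^x < 1 := Real.rpow_lt_one hq0.le hq1 hx
  have r := qPoch_rec (q^x) q hq0 hq1
  rw [← Real.rpow_add_one hq0.ne'] at r
  have e : (1 - q)^(1 - x) = (1-q)^(1-(x+1)) * (1 - q) := by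
    rw [← Real.rpow_add_one (by linarith)]; congr 1; ring
  unfold qGamma
  rw [r, e]
  have : 1 - q ≠ 0 := by linarith
  have : 1 - q^x ≠ 0 := by linarith
  field_simp

lemma qGamma_rec2 (q x : ℝ) (hq0 : 0 < q) (hq1 : q < 1) (hx : 0 < x) :
    qGamma q (x + 2) = (1 - q^x) * (1 - q^(x+1)) / (1 - q)^2 * qGamma q x := by
  rw [show x + 2 = (x + 1) + 1 by ring, qGamma_rec q (x+1) hq0 hq1 (by linarith), qGamma_rec q x hq0 hq1 hx]
  have : 1 - q ≠ 0 := by linarith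
  field_simp

lemma kappa_le (q γ : ℝ) (hq0 : 0 < q) (hq1 : q < 1) 
    (hγ0 : 0 ≤ γ) (hR : (γ = 0 ∨ γ = 1) ∨
    (γ ∈ Set.Ioo (0 : ℝ) 2 ∧ γ ≠ 1 ∧
      1 < q⁻¹ * (1 - q) * (1 - q ^ (γ + 1)) * (1 - q ^ (γ + 2)))) :
    q^2 * ((1 - q^(γ+1)) * (1 - q^(γ+1+1))) / ((1 - q^(γ+3)) * (1 - q^(γ+3+1))) ≤ 3/10 := by
  have hp : ∀ y : ℝ, 0 < y → q^y < 1 := fun y hy => Real.rpow_lt_one hq0.le hq1 hy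
  have hp0 : ∀ y : ℝ, 0 < q^y := fun y => Real.rpow_pos_of_pos hq0 y
  have a3 := hp (γ+3) (by linarith)
  have a4 := hp (γ+3+1) (by linarith)
  rw [div_le_iff₀ (mul_pos (by linarith) (by linarith))]
  rcases hR with (rfl | rfl) | ⟨_, _, h⟩
  · have e1 : q^((0:ℝ)+1) = q := by norm_num
    have e2 : q^((0:ℝ)+1+1) = q^2 := by rw [← Real.rpow_natCast]; norm_num
    have e3 : q^((0:ℝ)+3) = q^3 := by rw [← Real.rpow_natCast]; norm_num
    have e4 : q^((0:ℝ)+3+1) = q^4 := by rw [← Real.rpow_natCast]; norm_num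
    rw [e1, e2, e3, e4]
    have : q^2 * (1+q) * 10 ≤ 3 * ((1+q+q^2)*(1+q+q^2+q^3)) := by nlinarith [pow_pos hq0 2, pow_pos hq0 3, pow_pos hq0 4, pow_pos hq0 5]
    nlinarith [mul_le_mul_of_nonneg_left this (sq_nonneg (1-q))]
  · have e1 : q^((1:ℝ)+1) = q^2 := by rw [← Real.rpow_natCast]; norm_num
    have e2 : q^((1:ℝ)+1+1) = q^3 := by rw [← Real.rpow_natCast]; norm_num
    have e3 : q^((1:ℝ)+3) = q^4 := by rw [← Real.rpow_natCast]; norm_num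
    have e4 : q^((1:ℝ)+3+1) = q^5 := by rw [← Real.rpow_natCast]; norm_num
    rw [e1, e2, e3, e4]
    have : q^2 * (1+q+q^2) * 10 ≤ 3 * ((1+q^2)*(1+q+q^2+q^3+q^4)) := by
      have : 0 ≤ (1-q)^2*(3*q^4+9*q^3+11*q^2+9*q+3) := by positivity
      nlinarith
    have t : 0 ≤ (1-q)^2*(1+q) := by have : 0 ≤ 1 - q := by linarith
                                     positivity
    nlinarith [mul_le_mul_of_nonneg_left this t]
  · have b1 := hp (γ+1) (by linarith)
    have b2 := hp (γ+2) (by linarith)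
    have c1 := hp0 (γ+1)
    have c2 := hp0 (γ+2)
    have hle : q⁻¹ * (1 - q) * (1 - q ^ (γ + 1)) * (1 - q ^ (γ + 2)) ≤ q⁻¹ * (1-q) := by
      have : 0 ≤ q⁻¹ * (1-q) := mul_nonneg (by positivity) (by linarith)
      calc _ ≤ q⁻¹ * (1 - q) * 1 * 1 := by
            gcongr <;> linarith
        _ = _ := by ring
    have hq : q < 1 - q := by
      have h7 : 1 < q⁻¹ * (1-q) := h.trans_le hle
      rw [inv_mul_eq_div, lt_div_iff₀ hq0] at h7
      linarith
    have m1 : q^(γ+3) ≤ q^(γ+1) := Real.rpow_le_rpow_of_exponent_ge hq0 hq1.le (by linarith)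
    have m2 : q^(γ+3+1) ≤ q^(γ+1+1) := Real.rpow_le_rpow_of_exponent_ge hq0 hq1.le (by linarith)
    have b3 := hp (γ+1+1) (by linarith)
    have : (1 - q^(γ+1)) * (1 - q^(γ+1+1)) ≤ (1 - q^(γ+3)) * (1 - q^(γ+3+1)) := by
      apply mul_le_mul <;> linarith
    have p0 : 0 ≤ (1 - q^(γ+1)) * (1 - q^(γ+1+1)) := mul_nonneg (by linarith) (by linarith)
    have : q^2 ≤ 3/10 := by nlinarith
    nlinarith

section analysis
variable (a : ℕ → ℝ) (κ : ℝ)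

lemma a_bound (ha : ∀ n, 0 < a n) (hκ0 : 0 < κ)
    (hrat : ∀ n, 1 ≤ n → a (n+1) ≤ κ * a 1 * a n) (n : ℕ) : a (n+1) ≤ κ^n * a 1^(n+1) := by
  induction n with
  | zero => simp
  | succ n ih =>
    have h1 := ha 1
    calc a (n+1+1) ≤ κ * a 1 * a (n+1) := hrat _ (by omega)
      _ ≤ κ * a 1 * (κ^n * a 1^(n+1)) := by gcongr
      _ = _ := by ring

lemma a_summ (ha : ∀ n, 0 < a n) (hκ0 : 0 < κ) (hκ : κ ≤ 3/10)
    (hrat : ∀ n, 1 ≤ n → a (n+1) ≤ κ * a 1 * a n) :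
    Summable fun n : ℕ => ((n:ℝ)+1)^2 * a n * (1 / a 1)^n := by
  rw [← summable_nat_add_iff 1]
  have h1 := ha 1
  have hs : Summable fun n : ℕ => κ⁻¹ * κ⁻¹ * (((n + 2 : ℕ):ℝ)^2 * κ^(n+2)) := by
    apply Summable.mul_left
    exact (summable_nat_add_iff 2).2 (summable_pow_mul_geometric_of_norm_lt_one (R := ℝ) 2 (r := κ)
      (by rw [Real.norm_of_nonneg hκ0.le]; linarith))
  refine Summable.of_nonneg_of_le (fun n => ?_) (fun n => ?_) hs
  · have := ha (n+1); positivity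
  · have := a_bound a κ ha hκ0 hrat n
    calc _ ≤ (((n+1:ℕ):ℝ)+1)^2 * (κ^n * a 1^(n+1)) * (1 / a 1)^(n+1) := by gcongr
      _ = _ := by
        rw [one_div, inv_pow]
        push_cast
        field_simp
        ring

lemma tail_bound (ha : ∀ n, 0 < a n) (hκ0 : 0 < κ) (hκ : κ ≤ 3/10)
    (hrat : ∀ n, 1 ≤ n → a (n+1) ≤ κ * a 1 * a n) (z : ℂ) (ρ : ℝ) (hρ : ρ ≤ 2/5)
    (hz : a 1 * ‖z‖ ≤ ρ) (p : ℕ) (hp : p ≤ 2) :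
    ‖∑' m : ℕ, (((-1)^(m+3) * ((((m+3:ℕ):ℝ)+1)^p * a (m+3)) : ℝ) : ℂ) * z^(m+3)‖
      ≤ 4^p*κ^2*ρ^3*(16/13) := by
  have h1 := ha 1
  have hρ0 : 0 ≤ ρ := le_trans (by positivity) hz
  have hg : HasSum (fun m : ℕ => 4^p*κ^2*ρ^3*(3/16:ℝ)^m) (4^p*κ^2*ρ^3*(16/13)) := by
    have := (hasSum_geometric_of_lt_one (r := (3/16:ℝ)) (by norm_num) (by norm_num)).mul_left (4^p*κ^2*ρ^3)
    norm_num at this ⊢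
    exact this
  apply tsum_of_norm_bounded hg
  intro m
  have hpow : (((m+3:ℕ):ℝ)+1)^p ≤ 4^p * (25/16:ℝ)^m := by
    have b : ((m+3:ℕ):ℝ)+1 ≤ 4 * (5/4:ℝ)^m := by
      have := one_add_mul_le_pow (a := (1/4:ℝ)) (by norm_num) m
      push_cast
      norm_num at this ⊢
      linarith
    calc _ ≤ (4 * (5/4:ℝ)^m)^p := by gcongr
      _ = 4^p * ((5/4:ℝ)^m)^p := by ring
      _ ≤ 4^p * ((5/4:ℝ)^m)^2 := by
        gcongr
        exact one_le_pow₀ (by norm_num)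
      _ = _ := by rw [← pow_mul, mul_comm m 2, pow_mul]; norm_num
  have hb := a_bound a κ ha hκ0 hrat (m+2)
  have ha3 := ha (m+3)
  rw [norm_mul, norm_pow, Complex.norm_real, norm_mul, norm_pow, norm_neg, norm_one, one_pow, one_mul,
    Real.norm_of_nonneg (by positivity)]
  calc _ ≤ (4^p * (25/16:ℝ)^m) * (κ^(m+2) * a 1^(m+2+1)) * ‖z‖^(m+3) := by gcongr
    _ = (4^p * (25/16:ℝ)^m) * (κ^m*κ^2) * ((a 1 * ‖z‖)^m * (a 1 * ‖z‖)^3) := by ring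
    _ ≤ (4^p * (25/16:ℝ)^m) * ((3/10)^m*κ^2) * ((2/5)^m * ρ^3) := by
        gcongr
        exact hz.trans hρ
    _ = 4^p*κ^2*ρ^3*((25/16*(3/10)*(2/5):ℝ)^m) := by rw [mul_pow, mul_pow]; ring
    _ = _ := by norm_num

/-- values of the two relevant series -/
lemma series_split (ha : ∀ n, 0 < a n) (hκ0 : 0 < κ) (hκ : κ ≤ 3/10) (a0 : a 0 = 1)
    (a2 : a 2 = κ * a 1^2)
    (hrat : ∀ n, 1 ≤ n → a (n+1) ≤ κ * a 1 * a n) (z : ℂ) (hz : ‖z‖ < 1 / a 1) (p : ℕ) (hp : p ≤ 2) :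
    Summable (fun m : ℕ => (((-1)^m * (((m:ℝ)+1)^p * a m) : ℝ) : ℂ) * z^m) ∧
    ∑' m : ℕ, (((-1)^m * (((m:ℝ)+1)^p * a m) : ℝ) : ℂ) * z^m
      = 1 - 2^p * (a 1 * z) + 3^p * κ * (a 1 * z)^2 +
        ∑' m : ℕ, (((-1)^(m+3) * ((((m+3:ℕ):ℝ)+1)^p * a (m+3)) : ℝ) : ℂ) * z^(m+3) := by
  have h1 := ha 1
  have hs : Summable (fun m : ℕ => (((-1)^m * (((m:ℝ)+1)^p * a m) : ℝ) : ℂ) * z^m) := by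
    refine Summable.of_norm_bounded (a_summ a κ ha hκ0 hκ hrat) (fun m => ?_)
    have := ha m
    rw [norm_mul, norm_pow, Complex.norm_real, norm_mul, norm_pow, norm_neg, norm_one, one_pow, one_mul,
      Real.norm_of_nonneg (by positivity)]
    gcongr
    linarith [(Nat.cast_nonneg m : (0:ℝ) ≤ m)]
  refine ⟨hs, ?_⟩
  rw [← hs.sum_add_tsum_nat_add 3]
  congr 1
  simp [Finset.sum_range_succ, a0, a2]
  norm_num
  ring

lemma deriv_facts (ha : ∀ n, 0 < a n) (hκ0 : 0 < κ) (hκ : κ ≤ 3/10) (a0 : a 0 = 1)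
    (a2 : a 2 = κ * a 1^2)
    (hrat : ∀ n, 1 ≤ n → a (n+1) ≤ κ * a 1 * a n)
    (h : ℂ → ℂ) (hh : ∀ z, h z = ∑' n : ℕ, (((-1)^n * a n : ℝ) : ℂ) * z^(n+1)) :
    DifferentiableOn ℂ h (Metric.ball 0 (1 / a 1)) ∧
    ∀ z ∈ Metric.ball (0:ℂ) (1 / a 1),
      deriv h z = ∑' m : ℕ, (((-1)^m * (((m:ℝ)+1)^1 * a m) : ℝ) : ℂ) * z^m ∧
      deriv h z + z * deriv (deriv h) z = ∑' m : ℕ, (((-1)^m * (((m:ℝ)+1)^2 * a m) : ℝ) : ℂ) * z^m := by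
  have h1 := ha 1
  have hfun : h = fun z => ∑' n : ℕ, (((-1)^n * a n : ℝ) : ℂ) * z^(n+1) := funext hh
  have hsum := a_summ a κ ha hκ0 hκ hrat
  have hsum1 : Summable fun n : ℕ => ((n:ℝ)+1)^2 * a n * (1 / a 1)^n * (1 / a 1) := hsum.mul_right _
  have hb1 : ∀ (n : ℕ), ∀ w ∈ Metric.ball (0:ℂ) (1 / a 1),
      ‖(((-1)^n * a n : ℝ) : ℂ) * w^(n+1)‖ ≤ ((n:ℝ)+1)^2 * a n * (1 / a 1)^n * (1 / a 1) := by
    intro n w hw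
    rw [mem_ball_zero_iff] at hw
    have := ha n
    rw [norm_mul, norm_pow, Complex.norm_real, norm_mul, norm_pow, norm_neg, norm_one, one_pow, one_mul,
      Real.norm_of_nonneg this.le]
    calc a n * ‖w‖^(n+1) ≤ a n * (1 / a 1)^(n+1) := by gcongr
      _ = 1 * a n * (1 / a 1)^n * (1 / a 1) := by ring
      _ ≤ _ := by
        gcongr
        exact one_le_pow₀ (by linarith [(Nat.cast_nonneg n : (0:ℝ) ≤ n)])
  have hd1 : ∀ n : ℕ, DifferentiableOn ℂ (fun w : ℂ => (((-1)^n * a n : ℝ) : ℂ) * w^(n+1)) (Metric.ball (0:ℂ) (1 / a 1)) := by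
    intro n; fun_prop
  have D1 : ∀ z ∈ Metric.ball (0:ℂ) (1 / a 1),
      deriv h z = ∑' m : ℕ, (((-1)^m * (((m:ℝ)+1)^1 * a m) : ℝ) : ℂ) * z^m := by
    intro z hz
    have := Complex.hasSum_deriv_of_summable_norm hsum1 hd1 Metric.isOpen_ball hb1 hz
    rw [hfun, ← this.tsum_eq]
    congr 1; funext m
    rw [deriv_const_mul _ (by fun_prop)]
    simp
    ring
  have hb2 : ∀ (n : ℕ), ∀ w ∈ Metric.ball (0:ℂ) (1 / a 1),
      ‖(((-1)^n * (((n:ℝ)+1)^1 * a n) : ℝ) : ℂ) * w^n‖ ≤ ((n:ℝ)+1)^2 * a n * (1 / a 1)^n := by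
    intro n w hw
    rw [mem_ball_zero_iff] at hw
    have := ha n
    rw [norm_mul, norm_pow, Complex.norm_real, norm_mul, norm_pow, norm_neg, norm_one, one_pow, one_mul,
      Real.norm_of_nonneg (by positivity)]
    gcongr
    · linarith [(Nat.cast_nonneg n : (0:ℝ) ≤ n)]
    · norm_num
  have hd2 : ∀ n : ℕ, DifferentiableOn ℂ (fun w : ℂ => (((-1)^n * (((n:ℝ)+1)^1 * a n) : ℝ) : ℂ) * w^n) (Metric.ball (0:ℂ) (1 / a 1)) := by
    intro n; fun_prop
  refine ⟨?_, fun z hz => ⟨D1 z hz, ?_⟩⟩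
  · rw [hfun]
    exact Complex.differentiableOn_tsum_of_summable_norm hsum1 hd1 Metric.isOpen_ball hb1
  · have hev : deriv h =ᶠ[nhds z] fun w => ∑' m : ℕ, (((-1)^m * (((m:ℝ)+1)^1 * a m) : ℝ) : ℂ) * w^m := by
      filter_upwards [Metric.isOpen_ball.mem_nhds hz] with w hw using D1 w hw
    have H := Complex.hasSum_deriv_of_summable_norm hsum hd2 Metric.isOpen_ball hb2 hz
    have hz' : ‖z‖ < 1 / a 1 := by simpa using hz
    have S1 := (series_split a κ ha hκ0 hκ a0 a2 hrat z hz' 1 (by norm_num)).1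
    rw [hev.deriv_eq, D1 z hz]
    have := (S1.hasSum.add (H.mul_left z)).tsum_eq
    rw [← this]
    congr 1; funext m
    rw [deriv_const_mul _ (by fun_prop)]
    rcases m with _ | m
    · simp
    · simp
      ring

lemma key (ha : ∀ n, 0 < a n) (hκ0 : 0 < κ) (hκ : κ ≤ 3/10) (a0 : a 0 = 1)
    (a2 : a 2 = κ * a 1^2)
    (hrat : ∀ n, 1 ≤ n → a (n+1) ≤ κ * a 1 * a n)
    (h : ℂ → ℂ) (hh : ∀ z, h z = ∑' n : ℕ, (((-1)^n * a n : ℝ) : ℂ) * z^(n+1)) :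
    1 / (4 * a 1) < radiusConvex 0 h ∧ radiusConvex 0 h < 2 / (a 1 * (8 - 9*κ)) := by
  have h1 := ha 1
  obtain ⟨hdiff, hD⟩ := deriv_facts a κ ha hκ0 hκ a0 a2 hrat h hh
  set B := Metric.ball (0:ℂ) (1 / a 1) with hB
  have hBo : IsOpen B := Metric.isOpen_ball
  have hdiff1 := hdiff.deriv hBo
  have hdiff2 := hdiff1.deriv hBo
  have h8 : 0 < 8 - 9*κ := by linarith
  -- formula
  have form : ∀ z ∈ B, deriv h z ≠ 0 → 1 + z * deriv (deriv h) z / deriv h z =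
      (∑' m : ℕ, (((-1)^m * (((m:ℝ)+1)^2 * a m) : ℝ) : ℂ) * z^m) /
      (∑' m : ℕ, (((-1)^m * (((m:ℝ)+1)^1 * a m) : ℝ) : ℂ) * z^m) := by
    intro z hz hne
    rw [← (hD z hz).1, ← (hD z hz).2]
    field_simp
  have cont : ∀ z ∈ B, deriv h z ≠ 0 → ContinuousAt (fun z => (1 + z * deriv (deriv h) z / deriv h z).re) z := by
    intro z hz hne
    have c1 := (hdiff1.differentiableAt (hBo.mem_nhds hz)).continuousAt
    have c2 := (hdiff2.differentiableAt (hBo.mem_nhds hz)).continuousAt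
    exact Complex.continuous_re.continuousAt.comp
      (continuousAt_const.add ((continuousAt_id.mul c2).div c1 hne))
  -- lower bound positivity
  have low : ∀ z : ℂ, ‖z‖ ≤ 1 / (4 * a 1) → z ∈ B ∧ deriv h z ≠ 0 ∧ 0 < (1 + z * deriv (deriv h) z / deriv h z).re := by
    intro z hz
    have hz4 : a 1 * ‖z‖ ≤ 1/4 := by
      calc a 1 * ‖z‖ ≤ a 1 * (1 / (4 * a 1)) := by gcongr
        _ = 1/4 := by field_simp
    have hzl : ‖z‖ < 1 / a 1 := by
      rw [lt_div_iff₀ h1]; linarith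
    have hzB : z ∈ B := by simpa [hB] using hzl
    have s1 := (series_split a κ ha hκ0 hκ a0 a2 hrat z hzl 1 (by norm_num)).2
    have s2 := (series_split a κ ha hκ0 hκ a0 a2 hrat z hzl 2 (by norm_num)).2
    have t1 := tail_bound a κ ha hκ0 hκ hrat z (1/4) (by norm_num) hz4 1 (by norm_num)
    have t2 := tail_bound a κ ha hκ0 hκ hrat z (1/4) (by norm_num) hz4 2 (by norm_num)
    have key := lower_ineq κ (a 1 * z) _ _ hκ0 hκ (by simpa [abs_of_pos h1] using hz4)
      (by convert t2 using 1; norm_num) (by convert t1 using 1; norm_num)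
    have e1 : (1:ℂ) - 2 * (a 1 * z) + 3 * κ * (a 1 * z)^2 = 1 - 2^1 * (a 1 * z) + 3^1 * κ * (a 1 * z)^2 := by norm_num
    have e2 : (1:ℂ) - 4 * (a 1 * z) + 9 * κ * (a 1 * z)^2 = 1 - 2^2 * (a 1 * z) + 3^2 * κ * (a 1 * z)^2 := by norm_num
    rw [e1, e2, ← s1, ← s2] at key
    have hne : deriv h z ≠ 0 := by
      intro h0
      rw [← (hD z hzB).1, h0] at key
      simp at key
    refine ⟨hzB, hne, ?_⟩
    rw [form z hzB hne]
    exact key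
  -- upper
  set U := 2 / (a 1 * (8 - 9*κ)) with hU
  have hUpos : 0 < U := by positivity
  have ha1U : a 1 * U * (8 - 9*κ) = 2 := by rw [hU]; field_simp
  have hUle : a 1 * U ≤ 2/5 := by
    have : 0 < a 1 * U := by positivity
    nlinarith
  have hUn : ‖(U:ℂ)‖ = U := by rw [Complex.norm_real, Real.norm_of_nonneg hUpos.le]
  have hUl : ‖(U:ℂ)‖ < 1 / a 1 := by
    rw [hUn, lt_div_iff₀ h1]; linarith
  have hUB : (U:ℂ) ∈ B := by simpa [hB] using hUl
  have up : deriv h U ≠ 0 ∧ (1 + U * deriv (deriv h) U / deriv h U).re < 0 := by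
    have s1 := (series_split a κ ha hκ0 hκ a0 a2 hrat U hUl 1 (by norm_num)).2
    have s2 := (series_split a κ ha hκ0 hκ a0 a2 hrat U hUl 2 (by norm_num)).2
    have t1 := tail_bound a κ ha hκ0 hκ hrat U (2/5) (by norm_num) (by rw [hUn]; exact hUle) 1 (by norm_num)
    have t2 := tail_bound a κ ha hκ0 hκ hrat U (2/5) (by norm_num) (by rw [hUn]; exact hUle) 2 (by norm_num)
    have cst : ∀ p : ℕ, ∑' m : ℕ, (((-1)^(m+3) * ((((m+3:ℕ):ℝ)+1)^p * a (m+3)) : ℝ) : ℂ) * (U:ℂ)^(m+3)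
       = ((∑' m : ℕ, ((-1)^(m+3) * ((((m+3:ℕ):ℝ)+1)^p * a (m+3))) * U^(m+3) : ℝ) : ℂ) := by
      intro p
      rw [Complex.ofReal_tsum]
      congr 1; funext m; push_cast; ring
    rw [cst] at s1 s2 t1 t2
    rw [Complex.norm_real, Real.norm_eq_abs] at t1 t2
    have key := upper_ineq κ (a 1 * U) _ _ hκ0 hκ ha1U
      (by convert t2 using 1; norm_num) (by convert t1 using 1; norm_num)
    set n := ∑' m : ℕ, ((-1)^(m+3) * ((((m+3:ℕ):ℝ)+1)^2 * a (m+3))) * U^(m+3) with hn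
    set d := ∑' m : ℕ, ((-1)^(m+3) * ((((m+3:ℕ):ℝ)+1)^1 * a (m+3))) * U^(m+3) with hd
    have e1 : ((1 - 2 * (a 1 * U) + 3 * κ * (a 1 * U)^2 + d : ℝ) : ℂ) = deriv h U := by
      rw [(hD U hUB).1, s1]; push_cast; norm_num
    have e2 : ((1 - 4 * (a 1 * U) + 9 * κ * (a 1 * U)^2 + n : ℝ) : ℂ) = deriv h U + U * deriv (deriv h) U := by
      rw [(hD U hUB).2, s2]; push_cast; norm_num
    have hne : deriv h U ≠ 0 := by
      rw [← e1]
      intro h0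
      have h0' := Complex.ofReal_eq_zero.1 h0
      rw [h0'] at key
      simp at key
    refine ⟨hne, ?_⟩
    have e3 : 1 + U * deriv (deriv h) U / deriv h U = (deriv h U + U * deriv (deriv h) U) / deriv h U := by
      field_simp
    rw [e3, ← e2, ← e1, ← Complex.ofReal_div, Complex.ofReal_re]
    exact key
  -- a point below U where positivity fails
  obtain ⟨x, hx0, hxU, hxneg⟩ : ∃ x : ℝ, 0 < x ∧ x < U ∧ (1 + (x:ℂ) * deriv (deriv h) x / deriv h x).re < 0 := by
    have c := cont U hUB up.1
    have c' : ContinuousAt (fun x : ℝ => (1 + (x:ℂ) * deriv (deriv h) x / deriv h x).re) U :=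
      ContinuousAt.comp (f := fun x : ℝ => (x:ℂ)) (g := fun z : ℂ => (1 + z * deriv (deriv h) z / deriv h z).re) c Complex.continuous_ofReal.continuousAt
    have ev := c'.eventually (gt_mem_nhds up.2)
    have ev2 : ∀ᶠ x in nhdsWithin U (Set.Iio U), 0 < x ∧ x < U ∧ (1 + (x:ℂ) * deriv (deriv h) x / deriv h x).re < 0 := by
      filter_upwards [nhdsWithin_le_nhds ev, nhdsWithin_le_nhds (lt_mem_nhds hUpos), self_mem_nhdsWithin] with x q1 q2 q3
      exact ⟨q2, q3, q1⟩
    exact ev2.exists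
  have bdd : ∀ r ∈ {r : ℝ | 0 < r ∧ ∀ z : ℂ, ‖z‖ < r →
    0 < (1 + z * deriv (deriv h) z / deriv h z).re}, r ≤ x := by
    rintro r ⟨_, hr⟩
    by_contra hlt
    push Not at hlt
    have := hr x (by rw [Complex.norm_real, Real.norm_of_nonneg hx0.le]; exact hlt)
    linarith
  -- a radius above the lower bound
  have hL : 0 < 1 / (4 * a 1) := by positivity
  obtain ⟨r, hr, hrmem⟩ : ∃ r, 1 / (4 * a 1) < r ∧ r ∈ {r : ℝ | 0 < r ∧ ∀ z : ℂ, ‖z‖ < r →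
    0 < (1 + z * deriv (deriv h) z / deriv h z).re} := by
    have hsub : Metric.closedBall (0:ℂ) (1 / (4 * a 1)) ⊆
        interior {z : ℂ | 0 < (1 + z * deriv (deriv h) z / deriv h z).re} := by
      intro z hz
      obtain ⟨p1, p2, p3⟩ := low z (by simpa using hz)
      rw [mem_interior_iff_mem_nhds]
      exact (cont z p1 p2).eventually (lt_mem_nhds p3)
    obtain ⟨δ, hδ, hsub2⟩ := (isCompact_closedBall (0:ℂ) (1 / (4 * a 1))).exists_thickening_subset_open isOpen_interior hsub
    refine ⟨1 / (4 * a 1) + δ, by linarith, by linarith, fun z hz => ?_⟩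
    rw [thickening_closedBall hδ hL.le] at hsub2
    have hm := interior_subset (hsub2 (show z ∈ Metric.ball 0 (δ + 1 / (4 * a 1)) by simpa [add_comm] using hz))
    exact hm
  constructor
  · exact hr.trans_le (le_csSup ⟨x, bdd⟩ hrmem)
  · exact (csSup_le ⟨r, hrmem⟩ bdd).trans_lt hxU

end analysis

theorem stmt17 (q σ γ : ℝ) (hq0 : 0 < q) (hq1 : q < 1) (hσ : 0 < σ)
    (hγ0 : 0 ≤ γ) (hγ2 : γ < 2) (hR : condR q γ) :
    qGamma q (γ + 3) / (4 * σ ^ 2 * qGamma q (γ + 1)) <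
      radiusConvex 0 (hML γ σ q) ∧
    radiusConvex 0 (hML γ σ q) <
      2 * qGamma q (γ + 3) * qGamma q (γ + 5) /
        (σ ^ 2 * (8 * qGamma q (γ + 1) * qGamma q (γ + 5) -
          9 * q ^ 2 * qGamma q (γ + 3) ^ 2)) := by
  have hG : ∀ n : ℕ, 0 < qGamma q (2 * n + γ + 1) := fun n =>
    qGamma_pos q _ hq0 hq1 (by positivity)
  have g1 : 0 < qGamma q (γ + 1) := qGamma_pos q _ hq0 hq1 (by positivity)
  have g3 : 0 < qGamma q (γ + 3) := qGamma_pos q _ hq0 hq1 (by positivity)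
  have g5 : 0 < qGamma q (γ + 5) := qGamma_pos q _ hq0 hq1 (by positivity)
  set a : ℕ → ℝ := fun n => qGamma q (γ + 1) * (σ ^ (2 * n) * q ^ (n * (n - 1)) / qGamma q (2 * n + γ + 1)) with ha
  set κ : ℝ := q^2 * qGamma q (γ + 3)^2 / (qGamma q (γ + 1) * qGamma q (γ + 5)) with hκ
  have apos : ∀ n, 0 < a n := fun n => by have := hG n; simp only [ha]; positivity
  have a0 : a 0 = 1 := by
    simp [ha]; exact mul_inv_cancel₀ g1.ne'
  have a1 : a 1 = σ^2 * qGamma q (γ + 1) / qGamma q (γ + 3) := by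
    simp only [ha]
    rw [show (2 * ((1:ℕ):ℝ) + γ + 1) = γ + 3 by push_cast; ring]
    norm_num
    ring
  have a2 : a 2 = κ * a 1^2 := by
    rw [a1]
    simp only [ha, hκ]
    rw [show (2 * ((2:ℕ):ℝ) + γ + 1) = γ + 5 by push_cast; ring]
    norm_num
    field_simp
  have hp : ∀ y : ℝ, 0 < y → 0 < 1 - q^y := fun y hy => sub_pos.2 (Real.rpow_lt_one hq0.le hq1 hy)
  have hq : 0 < 1 - q := by linarith
  have step : ∀ n : ℕ, a (n+1) = a n * (σ^2 * q^(2*n) * (1-q)^2 /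
      ((1 - q^((2*n+γ+1:ℝ))) * (1 - q^((2*n+γ+1+1:ℝ))))) := by
    intro n
    have x0 : (0:ℝ) < 2*n+γ+1 := by positivity
    have r := qGamma_rec2 q (2*n+γ+1) hq0 hq1 x0
    have p1 := hp _ x0
    have p2 := hp (2*n+γ+1+1) (by positivity)
    have := hG n
    simp only [ha]
    rw [show (2 * ((n+1:ℕ):ℝ) + γ + 1) = 2*n+γ+1+2 by push_cast; ring, r]
    have e : (n+1) * (n + 1 - 1) = n * (n-1) + 2*n := by
      rcases n with _ | n
      · rfl
      · simp; ring
    rw [e, pow_add q, show 2*(n+1) = 2*n+2 by ring, pow_add σ]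
    field_simp
  have hκle : κ ≤ 3/10 := by
    have k := kappa_le q γ hq0 hq1 hγ0 hR
    have r1 := qGamma_rec2 q (γ+1) hq0 hq1 (by positivity)
    have r3 := qGamma_rec2 q (γ+3) hq0 hq1 (by positivity)
    rw [show γ + 1 + 2 = γ + 3 by ring] at r1
    rw [show γ + 3 + 2 = γ + 5 by ring] at r3
    have p1 := hp (γ+1) (by positivity)
    have p2 := hp (γ+1+1) (by positivity)
    have p3 := hp (γ+3) (by positivity)
    have p4 := hp (γ+3+1) (by positivity)
    convert k using 1
    rw [hκ, r3, r1]
    field_simp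
  have hκ0 : 0 < κ := by positivity
  have hrat : ∀ n, 1 ≤ n → a (n+1) ≤ κ * a 1 * a n := by
    intro n hn
    have h2 : κ * a 1 = σ^2 * q^2 * (1-q)^2 / ((1 - q^(γ+3)) * (1 - q^(γ+3+1))) := by
      have s1 := step 1
      rw [show 1 + 1 = 2 by rfl, a2] at s1
      have hne := (apos 1).ne'
      have : κ * a 1 = σ^2 * q^(2*1) * (1-q)^2 /
        ((1 - q^((2*(1:ℕ)+γ+1:ℝ))) * (1 - q^((2*(1:ℕ)+γ+1+1:ℝ)))) := by
        apply mul_left_cancel₀ hne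
        rw [← s1]; ring
      rw [this]
      rw [show (2 * ((1:ℕ):ℝ) + γ + 1) = γ + 3 by push_cast; ring]
    have hn' : (1:ℝ) ≤ n := by exact_mod_cast hn
    rw [step n, mul_comm, h2]
    have p3 := hp (γ+3) (by positivity)
    have p4 := hp (γ+3+1) (by positivity)
    have := apos n
    have m1 : q^((2*n+γ+1:ℝ)) ≤ q^(γ+3) := Real.rpow_le_rpow_of_exponent_ge hq0 hq1.le (by linarith)
    have m2 : q^((2*n+γ+1+1:ℝ)) ≤ q^(γ+3+1) := Real.rpow_le_rpow_of_exponent_ge hq0 hq1.le (by linarith)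
    have m3 : q^(2*n) ≤ q^2 := pow_le_pow_of_le_one hq0.le hq1.le (by omega)
    gcongr
    linarith
  have hh : ∀ z, hML γ σ q z = ∑' n : ℕ, (((-1)^n * a n : ℝ) : ℂ) * z^(n+1) := by
    intro z
    rw [hML, ← tsum_mul_left]
    congr 1; funext n
    simp only [ha]
    push_cast
    ring
  have := key a κ apos hκ0 hκle a0 a2 hrat _ hh
  rw [a1] at this
  have h8 : 0 < 8 - 9*κ := by linarith
  have e1 : qGamma q (γ + 3) / (4 * σ ^ 2 * qGamma q (γ + 1)) = 1 / (4 * (σ^2 * qGamma q (γ + 1) / qGamma q (γ + 3))) := by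
    field_simp
  have e2 : 8 * qGamma q (γ + 1) * qGamma q (γ + 5) - 9 * q ^ 2 * qGamma q (γ + 3) ^ 2
      = qGamma q (γ + 1) * qGamma q (γ + 5) * (8 - 9*κ) := by
    rw [hκ]; field_simp
  have e3 : 2 * qGamma q (γ + 3) * qGamma q (γ + 5) /
        (σ ^ 2 * (qGamma q (γ + 1) * qGamma q (γ + 5) * (8 - 9*κ))) =
      2 / (σ^2 * qGamma q (γ + 1) / qGamma q (γ + 3) * (8 - 9*κ)) := by
    field_simp
  rw [e1, e2, e3]
  exact this
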